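/- Let 𝔤 = 𝔤₁ ⊕ ⋯ ⊕ 𝔤_r be a finite-dimensional real Lie algebra that is the direct sum of ideals 𝔤₁, …, 𝔤_r, each of which is a simple Lie algebra with negative-definite Killing form, and let 𝔥 ⊆ 𝔤 be a Lie subalgebra. Suppose that for some s ≤ r one has 𝔥 ⊆ 𝔤₁ ⊕ ⋯ ⊕ 𝔤_s and 𝔥 ∩ 𝔤ᵢ ≠ 0 for all i = 1, …, s. Then dim N(𝔤,𝔥) = r − s, and the restriction map Ψ, sending an invariant symmetric bilinear form B on 𝔤 to its restriction B|_{𝔥×𝔥}, has rank s. -/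

import Mathlib

/-- The space `N(𝔤,𝔥)` of invariant symmetric bilinear forms on a real Lie algebra `L`
vanishing identically on a subspace `p`. -/
noncomputable def NForms (L : Type*) [LieRing L] [LieAlgebra ℝ L] (p : Submodule ℝ L) :
    Submodule ℝ (L →ₗ[ℝ] L →ₗ[ℝ] ℝ) where
  carrier := {B | (∀ x y z : L, B ⁅x, y⁆ z = B x ⁅y, z⁆) ∧ (∀ x y : L, B x y = B y x) ∧
    ∀ x ∈ p, ∀ y ∈ p, B x y = 0}
  add_mem' := by
    rintro B C ⟨hB1, hB2, hB3⟩ ⟨hC1, hC2, hC3⟩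
    exact ⟨fun x y z => by simp [hB1 x y z, hC1 x y z],
      fun x y => by simp [hB2 x y, hC2 x y],
      fun x hx y hy => by simp [hB3 x hx y hy, hC3 x hx y hy]⟩
  zero_mem' := ⟨fun _ _ _ => by simp, fun _ _ => by simp, fun _ _ _ _ => by simp⟩
  smul_mem' := by
    rintro c B ⟨h1, h2, h3⟩
    exact ⟨fun x y z => by simp [h1 x y z], fun x y => by simp [h2 x y],
      fun x hx y hy => by simp [h3 x hx y hy]⟩

/-- The space of invariant symmetric bilinear forms on a real Lie algebra `L`. -/
noncomputable def invSymmForms (L : Type*) [LieRing L] [LieAlgebra ℝ L] :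
    Submodule ℝ (L →ₗ[ℝ] L →ₗ[ℝ] ℝ) where
  carrier := {B | (∀ x y z : L, B ⁅x, y⁆ z = B x ⁅y, z⁆) ∧ ∀ x y : L, B x y = B y x}
  add_mem' := by
    rintro B C ⟨hB1, hB2⟩ ⟨hC1, hC2⟩
    exact ⟨fun x y z => by simp [hB1 x y z, hC1 x y z],
      fun x y => by simp [hB2 x y, hC2 x y]⟩
  zero_mem' := ⟨fun _ _ _ => by simp, fun _ _ => by simp⟩
  smul_mem' := by
    rintro c B ⟨h1, h2⟩
    exact ⟨fun x y z => by simp [h1 x y z], fun x y => by simp [h2 x y]⟩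

/-- The restriction map `Ψ`, sending a bilinear form on `L` to its restriction to the
subspace `p`, as a linear map. -/
noncomputable def restrictBilin (L : Type*) [LieRing L] [LieAlgebra ℝ L]
    (p : Submodule ℝ L) :
    (L →ₗ[ℝ] L →ₗ[ℝ] ℝ) →ₗ[ℝ] (↥p →ₗ[ℝ] ↥p →ₗ[ℝ] ℝ) where
  toFun B := LinearMap.domRestrict₁₂ B p p
  map_add' B C := by
    ext x y
    simp [LinearMap.domRestrict₁₂, LinearMap.domRestrict, LinearMap.domRestrict₂]
  map_smul' c B := by
    ext x y
    simp [LinearMap.domRestrict₁₂, LinearMap.domRestrict, LinearMap.domRestrict₂]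

/-!
On a compact simple Lie algebra an invariant symmetric form `B` is diagonalisable with respect to
the Killing form, and an eigenspace is a nonzero ideal, so `B` is a multiple of the Killing form.
In particular `B` vanishes as soon as `B v v = 0` for a single `v ≠ 0`. Distinct summands `𝔤ᵢ` are
orthogonal for every invariant form, so for any choice of `0 ≠ vᵢ ∈ 𝔤ᵢ` the numbers `B vᵢ vᵢ` are
linear coordinates on the space of invariant symmetric forms on `𝔤`. Choosing `vᵢ ∈ 𝔥 ∩ 𝔤ᵢ`
whenever `i ≤ s` turns `N(𝔤,𝔥)` into the subspace on which the first `s` coordinates vanish.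
-/

open Module Function

-- Needed to find the additive group structure on submodules of `L →ₗ[ℝ] L →ₗ[ℝ] ℝ`.
set_option maxSynthPendingDepth 3

section LinearAlgebra

/-- The inner product on a real vector space given by a positive definite symmetric bilinear form,
used to make the spectral theorem available for pairs of forms. -/
abbrev innerProductCoreOfPosDef {V : Type*} [AddCommGroup V] [Module ℝ V]
    {P : LinearMap.BilinForm ℝ V} (hPsymm : P.IsSymm) (hPpos : ∀ x ≠ 0, 0 < P x x) :
    InnerProductSpace.Core ℝ V where
  inner x y := P x y
  conj_inner_symm x y := hPsymm.eq y x
  re_inner_nonneg x := by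
    obtain rfl | hx := eq_or_ne x 0
    · simp
    · exact (hPpos x hx).le
  add_left x y z := by simp
  smul_left x y c := by simp
  definite x hx := by
    by_contra hne
    exact (hPpos x hne).ne' hx

theorem nondegenerate_of_anisotropic {R M : Type*} [CommRing R] [AddCommGroup M] [Module R M]
    {B : LinearMap.BilinForm R M} (hB : ∀ x ≠ 0, B x x ≠ 0) : B.Nondegenerate :=
  ⟨fun x hx => not_imp_not.1 (hB x) (hx x), fun x hx => not_imp_not.1 (hB x) (hx x)⟩

theorem exists_ne_zero_apply_eq_smul_apply {V : Type*} [AddCommGroup V] [Module ℝ V]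
    [FiniteDimensional ℝ V] [Nontrivial V] {P B : LinearMap.BilinForm ℝ V} (hPsymm : P.IsSymm)
    (hPpos : ∀ x ≠ 0, 0 < P x x) (hBsymm : B.IsSymm) :
    ∃ (c : ℝ) (v : V), v ≠ 0 ∧ B v = c • P v := by
  let core := innerProductCoreOfPosDef hPsymm hPpos
  let _ : NormedAddCommGroup V := core.toNormedAddCommGroup
  let _ : InnerProductSpace ℝ V := InnerProductSpace.ofCore core.toCore
  have hP : P.Nondegenerate := nondegenerate_of_anisotropic fun x hx => (hPpos x hx).ne'
  let T : V →ₗ[ℝ] V := B.symmCompOfNondegenerate P hP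
  have hT (x : V) : P (T x) = B x := LinearMap.BilinForm.comp_symmCompOfNondegenerate_apply B hP x
  have hTsymm : T.IsSymmetric := fun x y =>
    calc P (T x) y = B x y := by rw [hT]
      _ = B y x := hBsymm.eq x y
      _ = P (T y) x := by rw [hT]
      _ = P x (T y) := hPsymm.eq (T y) x
  obtain ⟨v, hv⟩ := hTsymm.hasEigenvalue_iSup_of_finiteDimensional.exists_hasEigenvector
  exact ⟨_, v, hv.2, by rw [← hT, hv.apply_eq_smul, map_smul, RCLike.ofReal_real_eq_id, id]⟩

theorem finrank_iInf_ker_proj (R : Type*) [Semiring R] [StrongRankCondition R] {ι : Type*}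
    [Finite ι] (S : Set ι) :
    finrank R (⨅ i ∈ S, LinearMap.ker (LinearMap.proj i : (ι → R) →ₗ[R] R) :
      Submodule R (ι → R)) = Sᶜ.ncard := by
  classical
  have := Fintype.ofFinite ι
  rw [(LinearMap.iInfKerProjEquiv R (fun _ => R) disjoint_compl_left
    (Set.compl_union_self S).ge).finrank_eq, finrank_fintype_fun_eq_card,
    Set.ncard_eq_toFinset_card', Set.toFinset_card]

theorem exists_ne_zero_mem_of_inf_ne_bot {R M : Type*} [Semiring R] [AddCommMonoid M] [Module R M]
    {p W : Submodule R M} [Nontrivial W] {c : Prop} (h : c → p ⊓ W ≠ ⊥) :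
    ∃ v : W, v ≠ 0 ∧ (c → (v : M) ∈ p) := by
  by_cases hc : c
  · obtain ⟨v, ⟨hvp, hvW⟩, hv⟩ := Submodule.exists_mem_ne_zero_of_ne_bot (h hc)
    exact ⟨⟨v, hvW⟩, mt (congrArg Subtype.val) hv, fun _ => hvp⟩
  · obtain ⟨v, hv⟩ := exists_ne (0 : W)
    exact ⟨v, hv, fun h => absurd h hc⟩

end LinearAlgebra

theorem ncard_setOf_fin_val_lt {r s : ℕ} (hs : s ≤ r) : {i : Fin r | (i : ℕ) < s}.ncard = s := by
  rw [Set.ncard_eq_toFinset_card', Set.toFinset_ofPred, Fin.card_filter_val_lt, min_eq_right hs]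

section LieIdeal

variable {R L : Type*} [CommRing R] [LieRing L] [LieAlgebra R L]

theorem isAtom_of_isSimple (I : LieIdeal R L) [LieAlgebra.IsSimple R I] : IsAtom I := by
  refine ⟨?_, fun J hJI => ?_⟩
  · rintro rfl
    exact LieAlgebra.IsSimple.non_abelian R (L := (⊥ : LieIdeal R L)) inferInstance
  · obtain h | h := LieAlgebra.IsSimple.eq_bot_or_eq_top (J.comap I.incl)
    · rw [LieIdeal.comap_incl_eq_bot] at h
      exact h.eq_bot_of_ge hJI.le
    · rw [LieIdeal.comap_incl_eq_top] at h
      exact absurd h hJI.not_ge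

theorem lie_self_eq_of_isSimple (I : LieIdeal R L) [LieAlgebra.IsSimple R I] : ⁅I, I⁆ = I :=
  lie_eq_self_of_isAtom_of_nonabelian I (isAtom_of_isSimple I) (LieAlgebra.IsSimple.non_abelian R)

theorem lie_eq_bot_of_disjoint {I J : LieIdeal R L} (hIJ : Disjoint I J) : ⁅I, J⁆ = ⊥ :=
  le_bot_iff.1 ((LieSubmodule.lie_le_inf I J).trans hIJ.le_bot)

theorem traceForm_apply_eq_zero_of_lie_eq_bot {M : Type*} [AddCommGroup M] [Module R M]
    [LieRingModule L M] [LieModule R L M] {N : LieSubmodule R L M} {J : LieIdeal R L}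
    (hJN : ⁅J, N⁆ = ⊥) (x : L) {y : L} (hy : y ∈ J) : LieModule.traceForm R L N x y = 0 := by
  have hy0 : LieModule.toEnd R L N y = 0 := by
    ext m
    exact (LieSubmodule.lie_eq_bot_iff N J).1 hJN y hy m m.2
  rw [LieModule.traceForm_apply_apply, hy0, LinearMap.comp_zero, map_zero]

end LieIdeal

namespace invSymmForms

variable {L : Type*} [LieRing L] [LieAlgebra ℝ L] {B : L →ₗ[ℝ] L →ₗ[ℝ] ℝ}

theorem isSymm (hB : B ∈ invSymmForms L) : LinearMap.BilinForm.IsSymm B :=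
  ⟨hB.2⟩

theorem traceForm_mem (M : Type*) [AddCommGroup M] [Module ℝ M] [LieRingModule L M]
    [LieModule ℝ L M] : LieModule.traceForm ℝ L M ∈ invSymmForms L :=
  ⟨LieModule.traceForm_apply_lie_apply ℝ L M, LieModule.traceForm_comm ℝ L M⟩

theorem compl₁₂_mem {L' : Type*} [LieRing L'] [LieAlgebra ℝ L'] (f : L' →ₗ⁅ℝ⁆ L)
    (hB : B ∈ invSymmForms L) :
    B.compl₁₂ (f : L' →ₗ[ℝ] L) (f : L' →ₗ[ℝ] L) ∈ invSymmForms L' := by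
  refine ⟨fun x y z => ?_, fun x y => hB.2 (f x) (f y)⟩
  simp only [LinearMap.compl₁₂_apply, LieHom.coe_toLinearMap, LieHom.map_lie, hB.1]

/-- The radical of an invariant symmetric bilinear form, which invariance makes an ideal. -/
def radical (hB : B ∈ invSymmForms L) : LieIdeal ℝ L where
  __ := LinearMap.ker B
  lie_mem {x y} hy := by
    change B ⁅x, y⁆ = 0
    ext z
    rw [← lie_skew, map_neg, LinearMap.neg_apply, hB.1, LinearMap.mem_ker.1 hy,
      LinearMap.zero_apply, neg_zero, LinearMap.zero_apply]

theorem mem_radical (hB : B ∈ invSymmForms L) {x : L} : x ∈ radical hB ↔ B x = 0 :=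
  Iff.rfl

theorem eq_zero_of_apply_eq_zero [LieAlgebra.IsSimple ℝ L] (hB : B ∈ invSymmForms L) {v : L}
    (hv : v ≠ 0) (hBv : B v = 0) : B = 0 := by
  obtain h | h := LieAlgebra.IsSimple.eq_bot_or_eq_top (radical hB)
  · exact absurd ((LieSubmodule.eq_bot_iff _).1 h v hBv) hv
  · refine LinearMap.ext fun x => ?_
    exact (mem_radical hB).1 (h ▸ LieSubmodule.mem_top x)

theorem exists_eq_smul_of_posDef [FiniteDimensional ℝ L] [LieAlgebra.IsSimple ℝ L]
    {P : L →ₗ[ℝ] L →ₗ[ℝ] ℝ} (hP : P ∈ invSymmForms L) (hPpos : ∀ x ≠ 0, 0 < P x x)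
    (hB : B ∈ invSymmForms L) : ∃ c : ℝ, B = c • P := by
  have := LieAlgebra.IsSimple.nontrivial ℝ L
  obtain ⟨c, v, hv, hBv⟩ := exists_ne_zero_apply_eq_smul_apply (isSymm hP) hPpos (isSymm hB)
  have hmem : B - c • P ∈ invSymmForms L := sub_mem hB (Submodule.smul_mem _ c hP)
  have hv0 : (B - c • P) v = 0 := by
    rw [LinearMap.sub_apply, LinearMap.smul_apply, hBv, sub_self]
  exact ⟨c, sub_eq_zero.1 (eq_zero_of_apply_eq_zero hmem hv hv0)⟩

theorem apply_eq_zero_of_lie_eq_bot (hB : B ∈ invSymmForms L) {I J : LieIdeal ℝ L}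
    (hI : ⁅I, I⁆ = I) (hIJ : ⁅I, J⁆ = ⊥) {x y : L} (hx : x ∈ I) (hy : y ∈ J) : B x y = 0 := by
  suffices I.toSubmodule ≤ LinearMap.ker (B.flip y) from this hx
  rw [← hI, LieSubmodule.lieIdeal_oper_eq_linear_span', Submodule.span_le]
  rintro _ ⟨a, -, b, hb, rfl⟩
  change B ⁅a, b⁆ y = 0
  rw [hB.1, (LieSubmodule.lie_eq_bot_iff J I).1 hIJ b hb y hy, map_zero]

end invSymmForms

/-- A real Lie algebra is compact simple if it is simple with negative definite Killing form; the
summands `𝔤ᵢ` are of this kind. -/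
structure IsCompactSimple (𝔨 : Type*) [LieRing 𝔨] [LieAlgebra ℝ 𝔨] : Prop where
  isSimple : LieAlgebra.IsSimple ℝ 𝔨
  killingForm_neg : ∀ x : 𝔨, x ≠ 0 → killingForm ℝ 𝔨 x x < 0

namespace IsCompactSimple

variable {L : Type*} [LieRing L] [LieAlgebra ℝ L]

theorem nontrivial (hL : IsCompactSimple L) : Nontrivial L :=
  have := hL.isSimple
  LieAlgebra.IsSimple.nontrivial ℝ L

variable [FiniteDimensional ℝ L]

theorem of_lieIdeal {I : LieIdeal ℝ L} (hI : LieAlgebra.IsSimple ℝ I)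
    (hneg : ∀ x ∈ I, x ≠ 0 → killingForm ℝ L x x < 0) : IsCompactSimple I where
  isSimple := hI
  killingForm_neg x hx := by
    rw [LieIdeal.killingForm_eq]
    exact hneg x x.2 (mt (fun h => Subtype.ext h) hx)

theorem eq_zero_of_apply_self_eq_zero (hL : IsCompactSimple L) {B : L →ₗ[ℝ] L →ₗ[ℝ] ℝ}
    (hB : B ∈ invSymmForms L) {v : L} (hv : v ≠ 0) (hBv : B v v = 0) : B = 0 := by
  have := hL.isSimple
  obtain ⟨c, rfl⟩ := invSymmForms.exists_eq_smul_of_posDef (P := -killingForm ℝ L)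
    (neg_mem (invSymmForms.traceForm_mem L)) (fun x hx => neg_pos.2 (hL.killingForm_neg x hx)) hB
  have hc : c * -killingForm ℝ L v v = 0 := hBv
  rw [(mul_eq_zero.1 hc).resolve_right (neg_ne_zero.2 (hL.killingForm_neg v hv).ne), zero_smul]

end IsCompactSimple

section CompactDecomposition

variable {L : Type*} [LieRing L] [LieAlgebra ℝ L]

/-- The values `B vᵢ vᵢ` of an invariant symmetric form `B` on a family of vectors; these are
linear coordinates for `B` when the `vᵢ` are nonzero vectors of the compact simple summands. -/
noncomputable def diagEval {ι : Type*} (v : ι → L) : invSymmForms L →ₗ[ℝ] ι → ℝ :=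
  LinearMap.pi fun i =>
    LinearMap.applyₗ (v i) ∘ₗ LinearMap.applyₗ (v i) ∘ₗ (invSymmForms L).subtype

theorem diagEval_apply {ι : Type*} (v : ι → L) (B : invSymmForms L) (i : ι) :
    diagEval v B i = B.1 (v i) (v i) :=
  rfl

variable {ι : Type*} {g : ι → LieIdeal ℝ L} {v : ∀ i, g i}

theorem diagEval_surjective [Finite ι] (hdisj : Pairwise (Disjoint on g))
    (hv : ∀ i, killingForm ℝ (g i) (v i) (v i) ≠ 0) :
    Surjective (diagEval fun i => (v i : L)) := by
  classical
  have := Fintype.ofFinite ι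
  let κ (i : ι) : invSymmForms L :=
    ⟨LieModule.traceForm ℝ L (g i), invSymmForms.traceForm_mem (g i)⟩
  have hκ_self (i : ι) : (κ i).1 (v i) (v i) ≠ 0 := hv i
  have hκ_ne {i j : ι} (hij : i ≠ j) : (κ i).1 (v j) (v j) = 0 :=
    traceForm_apply_eq_zero_of_lie_eq_bot (lie_eq_bot_of_disjoint (hdisj hij.symm)) _ (v j).2
  intro c
  refine ⟨∑ i, (c i / (κ i).1 (v i) (v i)) • κ i, funext fun j => ?_⟩
  calc diagEval (fun i => (v i : L)) (∑ i, (c i / (κ i).1 (v i) (v i)) • κ i) j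
      = ∑ i, c i / (κ i).1 (v i) (v i) * (κ i).1 (v j) (v j) := by
        rw [map_sum, Finset.sum_apply]
        simp only [map_smul, Pi.smul_apply, smul_eq_mul]
        rfl
    _ = c j / (κ j).1 (v j) (v j) * (κ j).1 (v j) (v j) :=
        Finset.sum_eq_single_of_mem j (Finset.mem_univ j) fun i _ hij => by
          rw [hκ_ne hij, mul_zero]
    _ = c j := div_mul_cancel₀ _ (hκ_self j)

variable [FiniteDimensional ℝ L]

theorem apply_eq_zero_of_mem_iSup (hg : ∀ i, IsCompactSimple (g i))
    (hdisj : Pairwise (Disjoint on g)) (hv : ∀ i, v i ≠ 0) {B : L →ₗ[ℝ] L →ₗ[ℝ] ℝ}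
    (hB : B ∈ invSymmForms L) (hBv : ∀ i, B (v i) (v i) = 0) {x y : L}
    (hx : x ∈ ⨆ i, (g i).toSubmodule) (hy : y ∈ ⨆ i, (g i).toSubmodule) : B x y = 0 := by
  have hblock (i j : ι) (a : L) (ha : a ∈ g i) (b : L) (hb : b ∈ g j) : B a b = 0 := by
    obtain rfl | hij := eq_or_ne i j
    · have hBi := (hg i).eq_zero_of_apply_self_eq_zero
        (invSymmForms.compl₁₂_mem (g i).incl hB) (hv i) (hBv i)
      exact LinearMap.congr_fun₂ hBi ⟨a, ha⟩ ⟨b, hb⟩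
    · have := (hg i).isSimple
      exact invSymmForms.apply_eq_zero_of_lie_eq_bot hB (lie_self_eq_of_isSimple (g i))
        (lie_eq_bot_of_disjoint (hdisj hij)) ha hb
  have hleft (i : ι) (a : L) (ha : a ∈ g i) : B a y = 0 :=
    (iSup_le fun j b hb => hblock i j a ha b hb : _ ≤ LinearMap.ker (B a)) hy
  exact (iSup_le fun i a ha => hleft i a ha : _ ≤ LinearMap.ker (B.flip y)) hx

theorem diagEval_injective (hg : ∀ i, IsCompactSimple (g i))
    (hdisj : Pairwise (Disjoint on g)) (hsup : ⨆ i, (g i).toSubmodule = ⊤) (hv : ∀ i, v i ≠ 0) :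
    Injective (diagEval fun i => (v i : L)) := by
  refine (injective_iff_map_eq_zero _).2 fun B hB => Subtype.ext ?_
  ext x y
  exact apply_eq_zero_of_mem_iSup hg hdisj hv B.2 (congrFun hB)
    (hsup ▸ Submodule.mem_top) (hsup ▸ Submodule.mem_top)

end CompactDecomposition

section Restriction

variable {L : Type*} [LieRing L] [LieAlgebra ℝ L]

theorem NForms_le_invSymmForms (p : Submodule ℝ L) : NForms L p ≤ invSymmForms L :=
  fun _ hB => ⟨hB.1, hB.2.1⟩

theorem ker_domRestrict_restrictBilin (p : Submodule ℝ L) :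
    LinearMap.ker ((restrictBilin L p).domRestrict (invSymmForms L)) =
      (NForms L p).comap (invSymmForms L).subtype := by
  ext B
  refine ⟨fun hB => ⟨B.2.1, B.2.2, fun x hx y hy => ?_⟩, fun hB => ?_⟩
  · exact LinearMap.congr_fun₂ (LinearMap.mem_ker.1 hB) ⟨x, hx⟩ ⟨y, hy⟩
  · rw [LinearMap.mem_ker]
    ext x y
    exact hB.2.2 x x.2 y y.2

theorem finrank_map_restrictBilin_add_finrank_NForms [FiniteDimensional ℝ L]
    (p : Submodule ℝ L) :
    finrank ℝ ((invSymmForms L).map (restrictBilin L p)) + finrank ℝ (NForms L p) =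
      finrank ℝ (invSymmForms L) := by
  rw [← LinearMap.finrank_range_add_finrank_ker
    ((restrictBilin L p).domRestrict (invSymmForms L)), LinearMap.range_domRestrict,
    ker_domRestrict_restrictBilin,
    (Submodule.comapSubtypeEquivOfLe (NForms_le_invSymmForms p)).finrank_eq]

theorem comap_subtype_NForms_eq_comap_diagEval [FiniteDimensional ℝ L] {ι : Type*}
    {g : ι → LieIdeal ℝ L} (hg : ∀ i, IsCompactSimple (g i)) (hdisj : Pairwise (Disjoint on g))
    {p : Submodule ℝ L} {S : Set ι} (hp : p ≤ ⨆ i : S, (g i).toSubmodule) {v : ∀ i, g i}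
    (hv : ∀ i, v i ≠ 0) (hvp : ∀ i ∈ S, (v i : L) ∈ p) :
    (NForms L p).comap (invSymmForms L).subtype =
      (⨅ i ∈ S, LinearMap.ker (LinearMap.proj i)).comap (diagEval fun i => (v i : L)) := by
  ext B
  simp only [Submodule.mem_comap, Submodule.mem_iInf, LinearMap.mem_ker, LinearMap.proj_apply,
    diagEval_apply, Submodule.subtype_apply]
  refine ⟨fun hB i hi => hB.2.2 _ (hvp i hi) _ (hvp i hi),
    fun hB => ⟨B.2.1, B.2.2, fun x hx y hy => ?_⟩⟩
  exact apply_eq_zero_of_mem_iSup (v := fun i : S => v i) (fun i => hg i)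
    (hdisj.comp_of_injective Subtype.val_injective) (fun i => hv i) B.2 (fun i => hB i i.2)
    (hp hx) (hp hy)

theorem stmt14_general [FiniteDimensional ℝ L] {ι : Type*} [Finite ι] {g : ι → LieIdeal ℝ L}
    (hg : ∀ i, IsCompactSimple (g i)) (hsup : ⨆ i, (g i).toSubmodule = ⊤)
    (hdisj : Pairwise (Disjoint on g)) {p : Submodule ℝ L} {S : Set ι}
    (hp : p ≤ ⨆ i : S, (g i).toSubmodule) (hcap : ∀ i ∈ S, p ⊓ (g i).toSubmodule ≠ ⊥) :
    finrank ℝ (NForms L p) = Sᶜ.ncard ∧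
      finrank ℝ ((invSymmForms L).map (restrictBilin L p)) = S.ncard := by
  have (i : ι) : Nontrivial (g i).toSubmodule := (hg i).nontrivial
  choose v hv hvp using fun i => exists_ne_zero_mem_of_inf_ne_bot (hcap i)
  have hκ (i : ι) : killingForm ℝ (g i) (v i) (v i) ≠ 0 := ((hg i).killingForm_neg _ (hv i)).ne
  let e : invSymmForms L ≃ₗ[ℝ] ι → ℝ := LinearEquiv.ofBijective (diagEval fun i => (v i : L))
    ⟨diagEval_injective hg hdisj hsup hv, diagEval_surjective hdisj hκ⟩
  have hinv : finrank ℝ (invSymmForms L) = Nat.card ι := by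
    have := Fintype.ofFinite ι
    rw [e.finrank_eq, finrank_fintype_fun_eq_card, Nat.card_eq_fintype_card]
  have hN : finrank ℝ (NForms L p) = Sᶜ.ncard := by
    rw [← (Submodule.comapSubtypeEquivOfLe (NForms_le_invSymmForms p)).finrank_eq,
      comap_subtype_NForms_eq_comap_diagEval hg hdisj hp hv hvp,
      ← finrank_iInf_ker_proj ℝ S]
    exact (e.ofSubmodule' _).finrank_eq
  have hrank := finrank_map_restrictBilin_add_finrank_NForms p
  rw [hinv, hN, ← Set.ncard_add_ncard_compl S] at hrank
  exact ⟨hN, Nat.add_right_cancel hrank⟩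

end Restriction

/-- Let `𝔤 = 𝔤₁ ⊕ ⋯ ⊕ 𝔤ᵣ` be a direct sum of ideals, each a simple Lie
algebra with negative-definite Killing form, and let `𝔥 ⊆ 𝔤` be a Lie subalgebra with
`𝔥 ⊆ 𝔤₁ ⊕ ⋯ ⊕ 𝔤ₛ` and `𝔥 ∩ 𝔤ᵢ ≠ 0` for `i = 1, …, s`.  Then `dim N(𝔤,𝔥) = r − s`, and
the restriction map `Ψ`, sending an invariant symmetric bilinear form on `𝔤` to its
restriction to `𝔥 × 𝔥`, has rank `s`. -/
theorem stmt14 {L : Type*} [LieRing L] [LieAlgebra ℝ L] [FiniteDimensional ℝ L]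
    (r : ℕ) (g : Fin r → LieIdeal ℝ L)
    (hsimple : ∀ i, LieAlgebra.IsSimple ℝ ↥(g i))
    (hneg : ∀ i, ∀ x ∈ g i, x ≠ 0 → killingForm ℝ L x x < 0)
    (hsup : (⨆ i, (LieSubmodule.toSubmodule (g i) : Submodule ℝ L)) = ⊤)
    (hindep : iSupIndep (fun i => (LieSubmodule.toSubmodule (g i) : Submodule ℝ L)))
    (h : LieSubalgebra ℝ L) (s : ℕ) (hs : s ≤ r)
    (hsub : h.toSubmodule ≤
      ⨆ i : {i : Fin r // (i : ℕ) < s}, (LieSubmodule.toSubmodule (g i.1) : Submodule ℝ L))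
    (hcap : ∀ i : Fin r, (i : ℕ) < s →
      h.toSubmodule ⊓ (LieSubmodule.toSubmodule (g i) : Submodule ℝ L) ≠ ⊥) :
    Module.finrank ℝ ↥(NForms L h.toSubmodule) = r - s ∧
    Module.finrank ℝ
        ↥(Submodule.map (restrictBilin L h.toSubmodule) (invSymmForms L)) = s := by
  have hdim := stmt14_general (S := {i : Fin r | (i : ℕ) < s})
    (fun i => .of_lieIdeal (hsimple i) (hneg i)) hsup
    (LieSubmodule.iSupIndep_toSubmodule.1 hindep).pairwiseDisjoint hsub hcap
  rwa [Set.ncard_compl, ncard_setOf_fin_val_lt hs, Nat.card_fin] at hdim
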